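/- If predicates P_i are pairwise disjoint, I is finite, each structure A_i is either finite, ω-categorical, or Ehrenfeucht, and at least one A_i is Ehrenfeucht, then the theory T = Th(A_P) of the infinite disjoint P-combination is Ehrenfeucht; moreover I(T, ω) = ∏_{i∈I} I(Th(A_i), min{|A_i|, ω}). -/

import Mathlib

open FirstOrder Language Cardinal

set_option autoImplicit false

/-- The induced structure on a subset of the universe of a structure in a relational language. -/
def subStructure (L : FirstOrder.Language.{0,0}) [L.IsRelational] (M : Type) [L.Structure M]
    (s : Set M) : L.Structure s where
  funMap := fun f _ => isEmptyElim f
  RelMap := fun r x => Structure.RelMap r (fun k => (x k : M))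

/-- The complete theory of the induced structure on a subset. -/
noncomputable def partTheory (L : FirstOrder.Language.{0,0}) [L.IsRelational] (M : Type)
    [L.Structure M] (s : Set M) : L.Theory :=
  @FirstOrder.Language.completeTheory L s (subStructure L M s)

/-- The number of models of `T` of cardinality `κ`, up to isomorphism: `I(T, κ)`. -/
noncomputable def numModels (L : FirstOrder.Language.{0,0}) (T : L.Theory) (κ : Cardinal) :
    Cardinal :=
  #(Quot (fun (N N' : {N : FirstOrder.Language.Theory.ModelType.{0,0,0} T // #N.1 = κ}) =>
    Nonempty (N.1 ≃[L] N'.1)))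

/-- A theory is ω-categorical if it has exactly one countable model up to isomorphism. -/
def OmegaCategorical (L : FirstOrder.Language.{0,0}) (T : L.Theory) : Prop :=
  numModels L T ℵ₀ = 1

/-- A theory is Ehrenfeucht if it has finitely many, but more than one, countable models. -/
def Ehrenfeucht (L : FirstOrder.Language.{0,0}) (T : L.Theory) : Prop :=
  1 < numModels L T ℵ₀ ∧ numModels L T ℵ₀ < ℵ₀

/-!
Let `A i` be the structure that the combination `M` induces on `P i`. Relativizing quantifiers to
`P i` shows that every countable model of `Th(M)` is the disjoint union of models of the theories
`Th(A i)`. Conversely, a Feferman-Vaught argument shows that the theory of a disjoint union only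
depends on the theories of its summands, so that replacing each `A i` by an elementarily equivalent
`R i` yields a model of `Th(M)`. A countable model is therefore determined up to isomorphism by an
arbitrary choice, for each `i`, of the isomorphism type of a model `R i` of `Th(A i)`. Its
cardinality is forced to be `min(|A i|, ω)`, because a finite structure is determined up to
isomorphism by its theory. Each factor of the resulting product is finite and positive, and it is
greater than one when `Th(A i)` is Ehrenfeucht.
-/

section ElementaryEquivalence

universe u v w w'

variable {L : FirstOrder.Language.{u, v}} {M : Type w} {N : Type w'} [L.Structure M]
  [L.Structure N]

lemma forall_realize_iff_of_elementarilyEquivalent (h : M ≅[L] N) {n : ℕ}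
    (φ : L.BoundedFormula Empty n) :
    (∀ x : Fin n → M, φ.Realize default x) ↔ ∀ x : Fin n → N, φ.Realize default x := by
  simpa only [Sentence.Realize, BoundedFormula.realize_alls] using
    h.realize_sentence φ.alls

lemma forall_relMap_iff_of_elementarilyEquivalent (h : M ≅[L] N) (P : L.Relations 1) :
    (∀ a : M, Structure.RelMap P ![a]) ↔ ∀ a : N, Structure.RelMap P ![a] := by
  simpa only [Sentence.Realize, Formula.Realize, BoundedFormula.realize_all, Fin.snoc_last,
    BoundedFormula.realize_rel₁, Function.comp_apply, Term.realize_var, Sum.elim_inr] using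
    h.realize_sentence (P.boundedFormula₁ (&(Fin.last 0))).all

lemma exists_relMap_iff_of_elementarilyEquivalent (h : M ≅[L] N) (P : L.Relations 1) :
    (∃ a : M, Structure.RelMap P ![a]) ↔ ∃ a : N, Structure.RelMap P ![a] := by
  simpa only [Sentence.Realize, Formula.Realize, BoundedFormula.realize_ex, Fin.snoc_last,
    BoundedFormula.realize_rel₁, Function.comp_apply, Term.realize_var, Sum.elim_inr] using
    h.realize_sentence (P.boundedFormula₁ (&(Fin.last 0))).ex

lemma relMap_zero_iff_of_elementarilyEquivalent (h : M ≅[L] N) (r : L.Relations 0) :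
    Structure.RelMap r (default : Fin 0 → M) ↔ Structure.RelMap r (default : Fin 0 → N) := by
  simpa only [Sentence.Realize, Formula.Realize, BoundedFormula.realize_rel,
    Subsingleton.elim _ default] using
    h.realize_sentence (r.boundedFormula Fin.elim0)

lemma finite_of_elementarilyEquivalent [Finite M] (h : M ≅[L] N) : Finite N := by
  rwa [← not_infinite_iff_finite, ← h.infinite_iff, not_infinite_iff_finite]

lemma nonempty_elementaryEmbedding_of_finite [Finite M] [Finite N] (h : M ≅[L] N) :
    Nonempty (M ↪ₑ[L] N) := by
  obtain ⟨f, hf⟩ : ∃ f : M → N, ∀ ψ : L.Formula M, ψ.Realize id → ψ.Realize f := by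
    by_contra! hfail
    choose ψ hψM hψN using hfail
    let χ : L.Sentence := Formula.iExs M ((Formula.iInf ψ).relabel Sum.inr)
    have hM : M ⊨ χ := by
      simpa [χ, Sentence.Realize, Function.comp_def] using ⟨id, hψM⟩
    have hN : ¬ N ⊨ χ := by
      simpa [χ, Sentence.Realize, Function.comp_def] using fun f => ⟨f, hψN f⟩
    exact hN ((h.realize_sentence χ).1 hM)
  have hf_iff (ψ : L.Formula M) : ψ.Realize f ↔ ψ.Realize id :=
    ⟨fun h' => by_contra fun hid => hf ψ.not hid h', hf ψ⟩
  exact ⟨⟨f, fun n φ x => by simpa using hf_iff (φ.relabel x)⟩⟩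

lemma nonempty_equiv_of_finite [Finite M] (h : M ≅[L] N) : Nonempty (M ≃[L] N) := by
  have : Finite N := finite_of_elementarilyEquivalent h
  obtain ⟨f⟩ := nonempty_elementaryEmbedding_of_finite h
  obtain ⟨g⟩ := nonempty_elementaryEmbedding_of_finite h.symm
  have hsurj : Function.Surjective f := fun b =>
    let ⟨a, ha⟩ := Finite.surjective_of_injective (g.injective.comp f.injective) (g b)
    ⟨a, g.injective ha⟩
  exact ⟨⟨.ofBijective f ⟨f.injective, hsurj⟩, fun F x => f.map_fun F x, fun r x => f.map_rel r x⟩⟩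

lemma min_mk_aleph0_eq_of_elementarilyEquivalent {N : Type w} [L.Structure N] (h : M ≅[L] N) :
    min #M ℵ₀ = min #N ℵ₀ := by
  cases finite_or_infinite M with
  | inl hM =>
    obtain ⟨e⟩ := nonempty_equiv_of_finite h
    rw [Cardinal.mk_congr e.toEquiv]
  | inr hM =>
    have : Infinite N := h.infinite
    rw [min_eq_right (aleph0_le_mk M), min_eq_right (aleph0_le_mk N)]

end ElementaryEquivalence

section Relativization

universe u v w w'

variable {L : FirstOrder.Language.{u, v}}

/-- The relativization of a formula to a unary predicate `P`: its quantifiers are restricted to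
`P`. -/
def relativize {α : Type*} (P : L.Relations 1) :
    ∀ {n : ℕ}, L.BoundedFormula α n → L.BoundedFormula α n
  | _, .falsum => .falsum
  | _, .equal t₁ t₂ => .equal t₁ t₂
  | _, .rel r ts => .rel r ts
  | _, .imp φ ψ => (relativize P φ).imp (relativize P ψ)
  | n, .all φ => ((P.boundedFormula₁ (&(Fin.last n))).imp (relativize P φ)).all

lemma realize_relativize {α : Type*} {P : L.Relations 1} {A : Type w} {M : Type w'} [L.Structure A]
    [L.Structure M] (f : A ↪[L] M) (hf : Set.range f = {a | Structure.RelMap P ![a]}) {n : ℕ}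
    (φ : L.BoundedFormula α n) (v : α → A) (xs : Fin n → A) :
    (relativize P φ).Realize (f ∘ v) (f ∘ xs) ↔ φ.Realize v xs := by
  induction φ with
  | falsum => exact Iff.rfl
  | equal t₁ t₂ =>
    simp only [relativize, BoundedFormula.Realize, ← Sum.comp_elim, HomClass.realize_term,
      f.injective.eq_iff]
  | rel r ts =>
    simp only [relativize, BoundedFormula.Realize, ← Sum.comp_elim, HomClass.realize_term]
    exact f.map_rel r _
  | imp φ ψ ihφ ihψ => simp only [relativize, BoundedFormula.realize_imp, ihφ, ihψ]
  | @all n φ ih =>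
    have hrange (a : M) : Structure.RelMap P ![a] ↔ a ∈ Set.range f := by
      rw [hf]; rfl
    simp only [relativize, BoundedFormula.realize_all, BoundedFormula.realize_imp,
      BoundedFormula.realize_rel₁, Function.comp_apply, Term.realize_var, Sum.elim_inr,
      Fin.snoc_last, hrange, Set.forall_mem_range, ← Fin.comp_snoc, ih]

lemma elementarilyEquivalent_of_range_eq {P : L.Relations 1} {A B M N : Type*} [L.Structure A]
    [L.Structure B] [L.Structure M] [L.Structure N] {f : A ↪[L] M} {g : B ↪[L] N}
    (hf : Set.range f = {a | Structure.RelMap P ![a]})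
    (hg : Set.range g = {a | Structure.RelMap P ![a]}) (h : M ≅[L] N) : A ≅[L] B := by
  refine elementarilyEquivalent_iff.2 fun φ => ?_
  have hA : M ⊨ relativize P φ ↔ A ⊨ φ := by
    simpa only [Sentence.Realize, Formula.Realize, Subsingleton.elim _ default] using
      realize_relativize f hf φ default default
  have hB : N ⊨ relativize P φ ↔ B ⊨ φ := by
    simpa only [Sentence.Realize, Formula.Realize, Subsingleton.elim _ default] using
      realize_relativize g hg φ default default
  rw [← hA, ← hB, h.realize_sentence]

end Relativization

section DisjointUnion

universe u v w w' x

variable {L : FirstOrder.Language.{u, v}} {I : Type x}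

/-- The disjoint union of a family of structures in a relational language: a relation holds of a
tuple if the tuple lies in a single summand and the relation holds there. In particular a nullary
relation holds as soon as it holds in some summand. -/
instance sigmaStructure [L.IsRelational] (N : I → Type w) [∀ i, L.Structure (N i)] :
    L.Structure (Σ i, N i) where
  funMap f := isEmptyElim f
  RelMap r x := ∃ i, ∃ y : Fin _ → N i, x = (fun k => ⟨i, y k⟩) ∧ Structure.RelMap r y

section Maps

variable [L.IsRelational] {K : I → Type w} {K' : I → Type w'} [∀ i, L.Structure (K i)]
  [∀ i, L.Structure (K' i)]

/-- The homomorphism of disjoint unions induced by a family of homomorphisms. -/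
def sigmaMapHom (f : ∀ i, K i →[L] K' i) : (Σ i, K i) →[L] Σ i, K' i where
  toFun := Sigma.map id fun i => f i
  map_fun' F := isEmptyElim F
  map_rel' := by
    rintro n r _ ⟨i, y, rfl, hy⟩
    exact ⟨i, f i ∘ y, rfl, (f i).map_rel r y hy⟩

/-- The isomorphism of disjoint unions induced by a family of isomorphisms. -/
def sigmaCongrEquiv (e : ∀ i, K i ≃[L] K' i) : (Σ i, K i) ≃[L] Σ i, K' i where
  toEquiv := Equiv.sigmaCongrRight fun i => (e i).toEquiv
  map_fun' F := isEmptyElim F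
  map_rel' r x := by
    refine ⟨fun hr => ?_, (sigmaMapHom fun i => (e i).toHom).map_rel r x⟩
    convert (sigmaMapHom fun i => (e i).symm.toHom).map_rel r _ hr
    exact funext fun k => ((Equiv.sigmaCongrRight fun i => (e i).toEquiv).symm_apply_apply _).symm

/-- The inclusion of a summand into a disjoint union. It reflects nullary relations only when the
summands agree on them. -/
def sigmaMkEmbedding (h₀ : ∀ (r : L.Relations 0) (i j : I),
    Structure.RelMap r (default : Fin 0 → K i) → Structure.RelMap r (default : Fin 0 → K j))
    (i : I) : K i ↪[L] Σ i, K i where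
  toFun := Sigma.mk i
  inj' := sigma_mk_injective
  map_fun' F := isEmptyElim F
  map_rel' {n} r x := by
    refine ⟨?_, fun hr => ⟨i, x, rfl, hr⟩⟩
    rintro ⟨j, y, hx, hy⟩
    cases n with
    | zero => exact Subsingleton.elim default x ▸ h₀ r j i (Subsingleton.elim y default ▸ hy)
    | succ n =>
      obtain rfl : i = j := congrArg Sigma.fst (congrFun hx 0)
      rwa [show x = y from funext fun k => sigma_mk_injective (congrFun hx k)]

end Maps

section SigmaTuple

/-- The tuple of the disjoint union whose `k`-th entry is the `k`-th entry of the tuple `v (c k)` of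
the summand `c k`. The entries of `v i` at the indices `k` with `c k ≠ i` are irrelevant; carrying
them gives each summand a full `n`-tuple, at which formulas in `n` variables can be evaluated. -/
def sigmaTuple {N : I → Type w} {n : ℕ} (c : Fin n → I) (v : ∀ i, Fin n → N i) :
    Fin n → Σ i, N i :=
  fun k => ⟨c k, v (c k) k⟩

variable {N : I → Type w} {n : ℕ}

lemma sigmaTuple_snoc (c : Fin n → I) (v : ∀ i, Fin n → N i) (j : I) (a : ∀ i, N i) :
    sigmaTuple (N := N) (Fin.snoc c j : Fin (n + 1) → I) (fun i => Fin.snoc (v i) (a i)) =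
      Fin.snoc (sigmaTuple c v) (⟨j, a j⟩ : Σ i, N i) := by
  funext k
  cases k using Fin.lastCases with
  | last =>
    simp only [sigmaTuple, Fin.snoc_last]
    exact congrArg (fun i => (⟨i, a i⟩ : Σ i, N i)) (Fin.snoc_last (α := fun _ => I) j c)
  | cast k =>
    simp only [sigmaTuple, Fin.snoc_castSucc]
    exact congrArg (fun i => (⟨i, v i k⟩ : Σ i, N i)) (Fin.snoc_castSucc (α := fun _ => I) j c k)

lemma sigmaTuple_eq_iff (c : Fin n → I) (v : ∀ i, Fin n → N i) (k l : Fin n) :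
    sigmaTuple c v k = sigmaTuple c v l ↔ c k = c l ∧ v (c k) k = v (c k) l := by
  simp only [sigmaTuple, Sigma.mk.injEq]
  refine and_congr_right fun hc => ?_
  rw [hc, heq_eq_eq]

lemma relMap_sigmaTuple [L.IsRelational] [∀ i, L.Structure (N i)] (r : L.Relations n)
    (c : Fin n → I) (v : ∀ i, Fin n → N i) :
    Structure.RelMap r (sigmaTuple c v) ↔ ∃ i, (∀ k, c k = i) ∧ Structure.RelMap r (v i) := by
  refine exists_congr fun i => ⟨?_, ?_⟩
  · rintro ⟨y, hx, hy⟩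
    obtain rfl : c = fun _ => i := funext fun k => congrArg Sigma.fst (congrFun hx k)
    obtain rfl : v i = y := funext fun k => sigma_mk_injective (congrFun hx k)
    exact ⟨fun _ => rfl, hy⟩
  · rintro ⟨hc, hr⟩
    obtain rfl : c = fun _ => i := funext hc
    exact ⟨v i, rfl, hr⟩

end SigmaTuple

end DisjointUnion

section FefermanVaught

universe u v w w' x

variable {L : FirstOrder.Language.{u, v}} {n : ℕ}

/-- Two tuples, possibly in different structures, satisfy the same formulas of `S`. -/
def AgreeOn {M : Type w} {N : Type w'} [L.Structure M] [L.Structure N]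
    (S : Finset (L.BoundedFormula Empty n)) (a : Fin n → M) (b : Fin n → N) : Prop :=
  ∀ ψ ∈ S, ψ.Realize default a ↔ ψ.Realize default b

lemma AgreeOn.symm {M : Type w} {N : Type w'} [L.Structure M] [L.Structure N]
    {S : Finset (L.BoundedFormula Empty n)} {a : Fin n → M} {b : Fin n → N} (h : AgreeOn S a b) :
    AgreeOn S b a :=
  fun ψ hψ => (h ψ hψ).symm

lemma AgreeOn.mono {M : Type w} {N : Type w'} [L.Structure M] [L.Structure N]
    {S T : Finset (L.BoundedFormula Empty n)} {a : Fin n → M} {b : Fin n → N} (h : AgreeOn T a b)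
    (hST : S ⊆ T) : AgreeOn S a b :=
  fun ψ hψ => h ψ (hST hψ)

open Classical in
/-- The formula saying that the tuple can be extended by one element so that, among the formulas of
`S`, exactly those in `T` hold. -/
noncomputable def existsType (S T : Finset (L.BoundedFormula Empty (n + 1))) :
    L.BoundedFormula Empty n :=
  (BoundedFormula.iInf fun ψ : S => if ψ.1 ∈ T then ψ.1 else ∼ψ.1).ex

lemma realize_existsType {M : Type w} [L.Structure M]
    (S T : Finset (L.BoundedFormula Empty (n + 1))) (a : Fin n → M) :
    (existsType S T).Realize default a ↔
      ∃ x : M, ∀ ψ ∈ S, ψ ∈ T ↔ ψ.Realize default (Fin.snoc a x : Fin (n + 1) → M) := by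
  simp only [existsType, BoundedFormula.realize_ex, BoundedFormula.realize_iInf, Subtype.forall]
  refine exists_congr fun x => forall₂_congr fun ψ _ => ?_
  split_ifs with hψ <;> simp [hψ]

open Classical in
/-- The finitely many formulas `existsType S T`, `T ⊆ S`: agreement on them is the back-and-forth
condition for agreement on `S`. -/
noncomputable def existsTypes (S : Finset (L.BoundedFormula Empty (n + 1))) :
    Finset (L.BoundedFormula Empty n) :=
  S.powerset.image (existsType S)

lemma AgreeOn.exists_snoc {M : Type w} {N : Type w'} [L.Structure M] [L.Structure N]
    {S : Finset (L.BoundedFormula Empty (n + 1))} {a : Fin n → M} {b : Fin n → N}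
    (h : AgreeOn (existsTypes S) a b) (y : N) :
    ∃ x : M, AgreeOn S (Fin.snoc a x : Fin (n + 1) → M) (Fin.snoc b y : Fin (n + 1) → N) := by
  classical
  let T := S.filter fun ψ => ψ.Realize default (Fin.snoc b y : Fin (n + 1) → N)
  have hT : existsType S T ∈ existsTypes S :=
    Finset.mem_image_of_mem _ (Finset.mem_powerset.2 (Finset.filter_subset _ S))
  have hy (ψ) (hψ : ψ ∈ S) : ψ ∈ T ↔ ψ.Realize default (Fin.snoc b y : Fin (n + 1) → N) := by
    simp [T, hψ]
  obtain ⟨x, hx⟩ := (realize_existsType S T a).1 <|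
    (h _ hT).2 ((realize_existsType S T b).2 ⟨y, hy⟩)
  exact ⟨x, fun ψ hψ => (hx ψ hψ).symm.trans (hy ψ hψ)⟩

open Classical in
/-- Finitely many formulas whose truth values in the summands of a disjoint union determine the
truth value of the given formula in the union. -/
noncomputable def summandFormulas :
    ∀ {n : ℕ}, L.BoundedFormula Empty n → Finset (L.BoundedFormula Empty n)
  | _, .falsum => ∅
  | _, .equal t₁ t₂ => {.equal t₁ t₂}
  | _, .rel r ts => {.rel r ts}
  | _, .imp φ ψ => summandFormulas φ ∪ summandFormulas ψ
  | _, .all φ => existsTypes (summandFormulas φ)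

lemma exists_eq_var_of_isRelational [L.IsRelational] (t : L.Term (Empty ⊕ Fin n)) :
    ∃ k : Fin n, t = &k := by
  rcases t with (e | k) | F
  · exact e.elim
  · exact ⟨k, rfl⟩
  · exact isEmptyElim F

variable [L.IsRelational] {I : Type x} {N : I → Type w} {N' : I → Type w'}
  [∀ i, L.Structure (N i)] [∀ i, L.Structure (N' i)]

lemma realize_all_sigmaTuple_of_agreeOn [∀ i, Nonempty (N' i)]
    {φ : L.BoundedFormula Empty (n + 1)} {S : Finset (L.BoundedFormula Empty (n + 1))}
    (hS : ∀ (c : Fin (n + 1) → I) (v : ∀ i, Fin (n + 1) → N i) (v' : ∀ i, Fin (n + 1) → N' i),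
      (∀ i, AgreeOn S (v i) (v' i)) →
        φ.Realize default (sigmaTuple c v) → φ.Realize default (sigmaTuple c v'))
    {c : Fin n → I} {v : ∀ i, Fin n → N i} {v' : ∀ i, Fin n → N' i}
    (h : ∀ i, AgreeOn (existsTypes S) (v i) (v' i))
    (hφ : φ.all.Realize default (sigmaTuple c v)) : φ.all.Realize default (sigmaTuple c v') := by
  classical
  rintro ⟨j, y⟩
  let b : ∀ i, N' i := Function.update (fun i => Classical.arbitrary (N' i)) j y
  choose a ha using fun i => (h i).exists_snoc (b i)
  have := hS (Fin.snoc c j) _ _ ha (by rw [sigmaTuple_snoc]; exact hφ ⟨j, a j⟩)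
  rwa [sigmaTuple_snoc, show b j = y from Function.update_self ..] at this

lemma realize_sigmaTuple_iff_of_agreeOn [∀ i, Nonempty (N i)] [∀ i, Nonempty (N' i)]
    (φ : L.BoundedFormula Empty n) (c : Fin n → I) (v : ∀ i, Fin n → N i)
    (v' : ∀ i, Fin n → N' i) (h : ∀ i, AgreeOn (summandFormulas φ) (v i) (v' i)) :
    φ.Realize default (sigmaTuple c v) ↔ φ.Realize default (sigmaTuple c v') := by
  classical
  induction φ with
  | falsum => exact Iff.rfl
  | equal t₁ t₂ =>
    obtain ⟨k, rfl⟩ := exists_eq_var_of_isRelational t₁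
    obtain ⟨l, rfl⟩ := exists_eq_var_of_isRelational t₂
    have hvar := h (c k) _ (Finset.mem_singleton_self _)
    simp only [BoundedFormula.Realize, Function.comp_apply, Term.realize_var, Sum.elim_inr]
      at hvar ⊢
    rw [sigmaTuple_eq_iff, sigmaTuple_eq_iff, hvar]
  | rel r ts =>
    choose t ht using fun k => exists_eq_var_of_isRelational (ts k)
    obtain rfl : ts = fun k => &(t k) := funext ht
    have hrel i := h i _ (Finset.mem_singleton_self _)
    simp only [BoundedFormula.Realize, Function.comp_apply, Term.realize_var, Sum.elim_inr]
      at hrel ⊢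
    exact (relMap_sigmaTuple r (c ∘ t) fun i => v i ∘ t).trans <|
      (exists_congr fun i => and_congr_right fun _ => hrel i).trans
      (relMap_sigmaTuple r (c ∘ t) fun i => v' i ∘ t).symm
  | imp φ ψ ihφ ihψ =>
    simp only [BoundedFormula.realize_imp,
      ihφ c v v' fun i => (h i).mono Finset.subset_union_left,
      ihψ c v v' fun i => (h i).mono Finset.subset_union_right]
  | all φ ih =>
    refine ⟨realize_all_sigmaTuple_of_agreeOn (fun c v v' h => (ih c v v' h).1) h,
      realize_all_sigmaTuple_of_agreeOn (fun c v' v h => (ih c v v' ?_).2) fun i => (h i).symm⟩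
    exact fun i => (h i).symm

theorem sigma_elementarilyEquivalent [∀ i, Nonempty (N i)] (h : ∀ i, N i ≅[L] N' i) :
    (Σ i, N i) ≅[L] Σ i, N' i := by
  have : ∀ i, Nonempty (N' i) := fun i => (h i).nonempty
  refine elementarilyEquivalent_iff.2 fun φ => ?_
  have hagree : ∀ i, AgreeOn (summandFormulas φ) (default : Fin 0 → N i)
      (default : Fin 0 → N' i) := fun i ψ _ => (h i).realize_sentence ψ
  simpa only [Sentence.Realize, Formula.Realize, Subsingleton.elim (sigmaTuple _ _) default] using
    realize_sigmaTuple_iff_of_agreeOn φ default _ _ hagree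

end FefermanVaught

section EquivOfRangeEq

universe u v w w' w''

variable {L : FirstOrder.Language.{u, v}} {A : Type w} {B : Type w'} {M : Type w''}
  [L.Structure A] [L.Structure B] [L.Structure M]

lemma relMap_singleton_map {F : Type*} [FunLike F A M] [StrongHomClass L F A M] (f : F)
    (P : L.Relations 1) (a : A) : Structure.RelMap P ![f a] ↔ Structure.RelMap P ![a] := by
  have hcomp : f ∘ ![a] = ![f a] := funext <| Fin.forall_fin_one.2 rfl
  rw [← StrongHomClass.map_rel f P ![a], hcomp]

/-- The isomorphism between two structures embedded with the same range in a third one. -/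
noncomputable def equivOfRangeEq (f : A ↪[L] M) (g : B ↪[L] M) (h : Set.range f = Set.range g) :
    A ≃[L] B :=
  let e : A ≃ B := (Equiv.ofInjective f f.injective).trans <|
    (Equiv.setCongr h).trans (Equiv.ofInjective g g.injective).symm
  have he (a : A) : g (e a) = f a := Equiv.apply_ofInjective_symm g.injective _
  { toEquiv := e
    map_fun' F x := g.injective <| by
      simp only [Equiv.toFun_as_coe, he, f.map_fun, g.map_fun, Function.comp_def]
    map_rel' r x := by
      simp only [Equiv.toFun_as_coe, ← f.map_rel r x, ← g.map_rel r, Function.comp_def, he] }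

end EquivOfRangeEq

section DisjointCombination

universe u v w w' x

variable {L : FirstOrder.Language.{u, v}} {I : Type x} {P : I → L.Relations 1}

/-- `N` is the disjoint combination of the structures it induces on the unary predicates `P i`:
these are nonempty, partition `N`, and no relation links two of them. -/
structure IsDisjointCombination (P : I → L.Relations 1) (N : Type w) [L.Structure N] : Prop where
  disjoint : ∀ i j : I, i ≠ j → ∀ a : N,
    ¬ (Structure.RelMap (P i) ![a] ∧ Structure.RelMap (P j) ![a])
  exists_relMap : ∀ i : I, ∃ a : N, Structure.RelMap (P i) ![a]
  cover : ∀ a : N, ∃ i : I, Structure.RelMap (P i) ![a]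
  exists_forall_relMap : ∀ (n : ℕ) (r : L.Relations n) (x : Fin n → N),
    Structure.RelMap r x → ∃ i : I, ∀ k : Fin n, Structure.RelMap (P i) ![x k]

lemma IsDisjointCombination.existsUnique {N : Type w} [L.Structure N]
    (h : IsDisjointCombination P N) (a : N) : ∃! i, Structure.RelMap (P i) ![a] :=
  existsUnique_of_exists_of_unique (h.cover a) fun i j hi hj =>
    by_contra fun hij => h.disjoint i j hij a ⟨hi, hj⟩

lemma IsDisjointCombination.of_elementarilyEquivalent [Finite I] {M : Type w} {N : Type w'}
    [L.Structure M] [L.Structure N] (hM : IsDisjointCombination P M) (h : M ≅[L] N) :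
    IsDisjointCombination P N where
  disjoint i j hij a := by
    have hφ := forall_realize_iff_of_elementarilyEquivalent h (n := 1)
      ∼((P i).boundedFormula₁ (&0) ⊓ (P j).boundedFormula₁ (&0))
    simp only [BoundedFormula.realize_not, BoundedFormula.realize_inf,
      BoundedFormula.realize_rel₁, Function.comp_apply, Term.realize_var, Sum.elim_inr] at hφ
    exact hφ.1 (fun x => hM.disjoint i j hij (x 0)) fun _ => a
  exists_relMap i := (exists_relMap_iff_of_elementarilyEquivalent h (P i)).1 (hM.exists_relMap i)
  cover a := by
    have hφ := forall_realize_iff_of_elementarilyEquivalent h (n := 1)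
      (BoundedFormula.iSup fun i => (P i).boundedFormula₁ (&0))
    simp only [BoundedFormula.realize_iSup, BoundedFormula.realize_rel₁, Function.comp_apply,
      Term.realize_var, Sum.elim_inr] at hφ
    exact hφ.1 (fun x => hM.cover (x 0)) fun _ => a
  exists_forall_relMap n r := by
    have hφ := forall_realize_iff_of_elementarilyEquivalent h
      ((r.boundedFormula fun k => &k).imp
        (BoundedFormula.iSup fun i => BoundedFormula.iInf fun k => (P i).boundedFormula₁ (&k)))
    simp only [BoundedFormula.realize_imp, BoundedFormula.realize_rel, BoundedFormula.realize_iSup,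
      BoundedFormula.realize_iInf, BoundedFormula.realize_rel₁, Function.comp_apply,
      Term.realize_var, Sum.elim_inr] at hφ
    exact hφ.1 (hM.exists_forall_relMap n r)

end DisjointCombination

section Cells

variable {L : FirstOrder.Language.{0, 0}} {M N : Type} [L.Structure M] [L.Structure N]

/-- The part of `M` cut out by the unary predicate `P`. -/
abbrev cell (P : L.Relations 1) (M : Type) [L.Structure M] : Set M :=
  {a | Structure.RelMap P ![a]}

lemma IsDisjointCombination.nonempty_cell {I : Type} {P : I → L.Relations 1}
    (hM : IsDisjointCombination P M) (i : I) : Nonempty (cell (P i) M) :=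
  let ⟨a, ha⟩ := hM.exists_relMap i
  ⟨⟨a, ha⟩⟩

variable [L.IsRelational]

/-- The structure induced on a cell. -/
instance cellStructure (P : L.Relations 1) : L.Structure (cell P M) :=
  subStructure L M (cell P M)

/-- The inclusion of a cell, as an embedding of structures. -/
def cellEmbedding (P : L.Relations 1) : cell P M ↪[L] M where
  toFun := Subtype.val
  inj' := Subtype.val_injective
  map_fun' F := isEmptyElim F
  map_rel' _ _ := Iff.rfl

lemma range_cellEmbedding (P : L.Relations 1) : Set.range (cellEmbedding (M := M) P) = cell P M :=
  Subtype.range_coe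

lemma cell_elementarilyEquivalent (P : L.Relations 1) (h : M ≅[L] N) : cell P M ≅[L] cell P N :=
  elementarilyEquivalent_of_range_eq (range_cellEmbedding P) (range_cellEmbedding P) h

/-- The isomorphism of cells induced by an isomorphism of structures. -/
noncomputable def cellCongrEquiv (P : L.Relations 1) (e : M ≃[L] N) : cell P M ≃[L] cell P N :=
  equivOfRangeEq (e.toEmbedding.comp (cellEmbedding P)) (cellEmbedding P) <| by
    refine (Set.range_comp e (cellEmbedding P)).trans ?_
    rw [range_cellEmbedding, range_cellEmbedding]
    ext b
    obtain ⟨a, rfl⟩ := e.surjective b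
    exact e.injective.mem_set_image.trans (relMap_singleton_map e P a).symm

end Cells

section CellDecomposition

variable {L : FirstOrder.Language.{0, 0}} [L.IsRelational] {I : Type} {P : I → L.Relations 1}
  {M : Type} [L.Structure M]

namespace IsDisjointCombination

/-- A disjoint combination is the disjoint union of its cells. -/
noncomputable def sigmaCellEquiv (hM : IsDisjointCombination P M) :
    (Σ i, cell (P i) M) ≃[L] M where
  toEquiv := Set.sigmaEquiv (fun i => cell (P i) M) hM.existsUnique
  map_fun' F := isEmptyElim F
  map_rel' {n} r x := by
    refine ⟨fun hr => ?_, ?_⟩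
    · obtain ⟨i, hi⟩ := hM.exists_forall_relMap n r _ hr
      refine ⟨i, fun k => ⟨_, hi k⟩, ?_, hr⟩
      exact funext fun k => (Set.sigmaEquiv _ hM.existsUnique).injective rfl
    · rintro ⟨i, y, rfl, hy⟩
      exact hy

variable {K : I → Type} [∀ i, L.Structure (K i)]

lemma relMap_summand_iff (hM : IsDisjointCombination P M) (hK : ∀ i, cell (P i) M ≅[L] K i)
    {i j : I} (a : K j) : Structure.RelMap (P i) ![a] ↔ j = i := by
  refine ⟨fun ha => ?_, ?_⟩
  · obtain ⟨b, hb⟩ := (exists_relMap_iff_of_elementarilyEquivalent (hK j) (P i)).2 ⟨a, ha⟩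
    rw [← relMap_singleton_map (cellEmbedding (P j))] at hb
    exact (hM.existsUnique b).unique b.2 hb
  · rintro rfl
    refine (forall_relMap_iff_of_elementarilyEquivalent (hK j) (P j)).1 (fun b => ?_) a
    exact (relMap_singleton_map (cellEmbedding (P j)) (P j) b).1 b.2

lemma relMap_zero_summand (hK : ∀ i, cell (P i) M ≅[L] K i) (r : L.Relations 0) (i j : I)
    (hr : Structure.RelMap r (default : Fin 0 → K i)) :
    Structure.RelMap r (default : Fin 0 → K j) := by
  have hcell (i : I) : Structure.RelMap r (default : Fin 0 → cell (P i) M) ↔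
      Structure.RelMap r (default : Fin 0 → M) := by
    rw [← (cellEmbedding (P i)).map_rel, Subsingleton.elim (_ ∘ _) default]
  rwa [← relMap_zero_iff_of_elementarilyEquivalent (hK _), hcell, ← hcell i,
    relMap_zero_iff_of_elementarilyEquivalent (hK i)]

/-- The cells of a disjoint union of structures elementarily equivalent to the cells of a disjoint
combination are its summands. -/
noncomputable def summandEquivCell (hM : IsDisjointCombination P M)
    (hK : ∀ i, cell (P i) M ≅[L] K i) (i : I) : K i ≃[L] cell (P i) (Σ i, K i) :=
  equivOfRangeEq (sigmaMkEmbedding (relMap_zero_summand hK) i) (cellEmbedding (P i)) <| by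
    rw [range_cellEmbedding]
    ext ⟨j, a⟩
    have hcell : (⟨j, a⟩ : Σ i, K i) ∈ cell (P i) (Σ i, K i) ↔ j = i :=
      (relMap_singleton_map (sigmaMkEmbedding (relMap_zero_summand hK) j) (P i) a).trans
        (hM.relMap_summand_iff hK a)
    rw [hcell]
    refine ⟨?_, ?_⟩
    · rintro ⟨b, hb⟩
      exact (congrArg Sigma.fst hb).symm
    · rintro rfl
      exact ⟨a, rfl⟩

lemma elementarilyEquivalent_sigma (hM : IsDisjointCombination P M)
    (hK : ∀ i, cell (P i) M ≅[L] K i) : M ≅[L] Σ i, K i :=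
  have := hM.nonempty_cell
  (StrongHomClass.elementarilyEquivalent hM.sigmaCellEquiv.symm).trans
    (sigma_elementarilyEquivalent hK)

end IsDisjointCombination

end CellDecomposition

section ModelsOfCard

variable {L : FirstOrder.Language.{0, 0}} {T : L.Theory} {κ : Cardinal.{0}} {A : Type}
  [L.Structure A]

/-- The models of `T` of cardinality `κ`, the objects that `numModels` counts up to isomorphism. -/
abbrev ModelOfCard (T : L.Theory) (κ : Cardinal.{0}) : Type 1 :=
  {N : Theory.ModelType.{0, 0, 0} T // #N = κ}

/-- Isomorphism of models of cardinality `κ`. -/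
instance isoSetoid (T : L.Theory) (κ : Cardinal.{0}) : Setoid (ModelOfCard T κ) where
  r N N' := Nonempty (N.1 ≃[L] N'.1)
  iseqv := ⟨fun N => ⟨.refl L N.1⟩, fun ⟨e⟩ => ⟨e.symm⟩, fun ⟨e⟩ ⟨f⟩ => ⟨f.comp e⟩⟩

namespace ModelOfCard

lemma elementarilyEquivalent (N : ModelOfCard (L.completeTheory A) κ) : A ≅[L] N.1 :=
  elementarilyEquivalent_iff.2 fun φ => (realize_iff_of_model_completeTheory A N.1 φ).symm

/-- A structure elementarily equivalent to `A`, as a model of the theory of `A`. -/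
def of [Nonempty A] {K : Type} [L.Structure K] (h : A ≅[L] K) (hc : #K = κ) :
    ModelOfCard (L.completeTheory A) κ :=
  have : Nonempty K := h.nonempty
  have : K ⊨ L.completeTheory A := h.theory_model
  ⟨Theory.ModelType.of _ K, hc⟩

end ModelOfCard

lemma numModels_completeTheory_mk_of_finite [Finite A] [Nonempty A] :
    numModels L (L.completeTheory A) #A = 1 := by
  refine Cardinal.eq_one_iff_unique.2 ⟨⟨?_⟩, ⟨Quot.mk _ (ModelOfCard.of (K := A) rfl rfl)⟩⟩
  rintro ⟨N⟩ ⟨N'⟩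
  have hN := ModelOfCard.elementarilyEquivalent N
  have : Finite N.1 := finite_of_elementarilyEquivalent hN
  exact Quot.sound <|
    nonempty_equiv_of_finite (hN.symm.trans (ModelOfCard.elementarilyEquivalent N'))

lemma infinite_of_numModels_aleph0_ne_zero (h : numModels L (L.completeTheory A) ℵ₀ ≠ 0) :
    Infinite A := by
  obtain ⟨⟨N⟩⟩ := Cardinal.mk_ne_zero_iff.1 h
  have : Infinite N.1 := Cardinal.infinite_iff.2 N.2.ge
  exact (ModelOfCard.elementarilyEquivalent N).symm.infinite

lemma numModels_min_mk_aleph0 (h : numModels L (L.completeTheory A) ℵ₀ ≠ 0) :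
    numModels L (L.completeTheory A) (min #A ℵ₀) = numModels L (L.completeTheory A) ℵ₀ := by
  have := infinite_of_numModels_aleph0_ne_zero h
  rw [min_eq_right (aleph0_le_mk A)]

lemma Ehrenfeucht.one_lt_numModels (h : Ehrenfeucht L (L.completeTheory A)) :
    1 < numModels L (L.completeTheory A) (min #A ℵ₀) := by
  rw [numModels_min_mk_aleph0 (zero_lt_one.trans h.1).ne']
  exact h.1

lemma numModels_mem_Ico [Nonempty A]
    (h : Finite A ∨ OmegaCategorical L (L.completeTheory A) ∨ Ehrenfeucht L (L.completeTheory A)) :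
    numModels L (L.completeTheory A) (min #A ℵ₀) ∈ Set.Ico 1 ℵ₀ := by
  rcases h with hfin | hcat | hEhr
  · rw [min_eq_left mk_le_aleph0, numModels_completeTheory_mk_of_finite]
    exact ⟨le_rfl, one_lt_aleph0⟩
  · have hone : numModels L (L.completeTheory A) ℵ₀ = 1 := hcat
    rw [numModels_min_mk_aleph0 (hone.trans_ne one_ne_zero), hone]
    exact ⟨le_rfl, one_lt_aleph0⟩
  · rw [numModels_min_mk_aleph0 (zero_lt_one.trans hEhr.1).ne']
    exact ⟨hEhr.1.le, hEhr.2⟩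

end ModelsOfCard

section CellModels

variable {L : FirstOrder.Language.{0, 0}} [L.IsRelational] {I : Type} {P : I → L.Relations 1}
  {M : Type} [L.Structure M]

lemma ModelOfCard.mk_cell (N : ModelOfCard (L.completeTheory M) ℵ₀) (Q : L.Relations 1) :
    #(cell Q N.1) = min #(cell Q M) ℵ₀ := by
  have hcell := cell_elementarilyEquivalent Q N.elementarilyEquivalent
  rw [min_mk_aleph0_eq_of_elementarilyEquivalent hcell, min_eq_left]
  exact (mk_set_le _).trans_eq N.2

namespace IsDisjointCombination

/-- The cell of a countable model of the theory of a disjoint combination `M`, as a model of the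
theory of the corresponding cell of `M`. -/
noncomputable def cellModel (hM : IsDisjointCombination P M) (i : I)
    (N : ModelOfCard (L.completeTheory M) ℵ₀) :
    ModelOfCard (L.completeTheory (cell (P i) M)) (min #(cell (P i) M) ℵ₀) :=
  have := hM.nonempty_cell i
  ModelOfCard.of (cell_elementarilyEquivalent (P i) N.elementarilyEquivalent) (N.mk_cell (P i))

/-- The isomorphism types of the cells of a countable model, as a function of its isomorphism
type. -/
noncomputable def cellModels (hM : IsDisjointCombination P M)
    (q : Quotient (isoSetoid (L.completeTheory M) ℵ₀)) (i : I) :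
    Quotient (isoSetoid (L.completeTheory (cell (P i) M)) (min #(cell (P i) M) ℵ₀)) :=
  q.map (hM.cellModel i) fun N N' (h : Nonempty (N.1 ≃[L] N'.1)) =>
    h.map fun e => cellCongrEquiv (P i) e

lemma cellModels_injective [Finite I] (hM : IsDisjointCombination P M) :
    Function.Injective hM.cellModels := by
  rintro ⟨N⟩ ⟨N'⟩ h
  have hcells (i : I) : Nonempty (cell (P i) N.1 ≃[L] cell (P i) N'.1) :=
    Quotient.exact (congrFun h i)
  have hN := hM.of_elementarilyEquivalent N.elementarilyEquivalent
  have hN' := hM.of_elementarilyEquivalent N'.elementarilyEquivalent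
  let e := sigmaCongrEquiv fun i => (hcells i).some
  exact Quotient.sound ⟨hN'.sigmaCellEquiv.comp (e.comp hN.sigmaCellEquiv.symm)⟩

lemma mk_sigma_eq_aleph0 [Countable I] [Infinite M] (hM : IsDisjointCombination P M)
    (R : ∀ i, ModelOfCard (L.completeTheory (cell (P i) M)) (min #(cell (P i) M) ℵ₀)) :
    #(Σ i, (R i).1) = ℵ₀ := by
  have hR : M ≅[L] Σ i, (R i).1 :=
    hM.elementarilyEquivalent_sigma fun i => (R i).elementarilyEquivalent
  have : Infinite (Σ i, (R i).1) := hR.infinite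
  have (i : I) : Countable (R i).1 :=
    mk_le_aleph0_iff.1 ((R i).2.trans_le (min_le_right _ _))
  exact mk_eq_aleph0 _

lemma cellModels_surjective [Countable I] [Infinite M] (hM : IsDisjointCombination P M) :
    Function.Surjective hM.cellModels := by
  intro q
  choose R hR using fun i => (q i).exists_rep
  have hcells (i : I) : cell (P i) M ≅[L] (R i).1 := (R i).elementarilyEquivalent
  refine ⟨⟦ModelOfCard.of (hM.elementarilyEquivalent_sigma hcells) (hM.mk_sigma_eq_aleph0 R)⟧, ?_⟩
  funext i
  rw [← hR i]
  exact Quotient.sound ⟨(hM.summandEquivCell hcells i).symm⟩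

end IsDisjointCombination

end CellModels

section ModelCount

variable {L : FirstOrder.Language.{0, 0}} [L.IsRelational] {I : Type} [Fintype I]
  {P : I → L.Relations 1} {M : Type} [L.Structure M]

theorem IsDisjointCombination.numModels_eq_prod [Infinite M] (hM : IsDisjointCombination P M) :
    numModels L (L.completeTheory M) ℵ₀ =
      ∏ i, numModels L (L.completeTheory (cell (P i) M)) (min #(cell (P i) M) ℵ₀) := by
  refine (mk_congr (.ofBijective _ ⟨hM.cellModels_injective, hM.cellModels_surjective⟩)).trans ?_
  rw [mk_pi, prod_eq_of_fintype, lift_uzero]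
  rfl

theorem stmt4_general (hM : IsDisjointCombination P M)
    (hparts : ∀ i, (cell (P i) M).Finite ∨ OmegaCategorical L (partTheory L M (cell (P i) M)) ∨
      Ehrenfeucht L (partTheory L M (cell (P i) M)))
    (hEhr : ∃ i, Ehrenfeucht L (partTheory L M (cell (P i) M))) :
    Ehrenfeucht L (L.completeTheory M) ∧
      numModels L (L.completeTheory M) ℵ₀ =
        ∏ i, numModels L (partTheory L M (cell (P i) M)) (min #(cell (P i) M) ℵ₀) := by
  obtain ⟨i₀, hi₀⟩ := hEhr
  have : Infinite (cell (P i₀) M) :=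
    infinite_of_numModels_aleph0_ne_zero (zero_lt_one.trans hi₀.1).ne'
  have : Infinite M := .of_injective _ (Subtype.val_injective (p := (· ∈ cell (P i₀) M)))
  have hfactor (i : I) : numModels L (L.completeTheory (cell (P i) M))
      (min #(cell (P i) M) ℵ₀) ∈ Set.Ico 1 ℵ₀ :=
    have := hM.nonempty_cell i
    numModels_mem_Ico (hparts i)
  have hprod := hM.numModels_eq_prod
  refine ⟨⟨?_, ?_⟩, hprod⟩
  · rw [hprod]
    exact (Finset.one_lt_prod_iff_of_one_le fun i _ => (hfactor i).1).2
      ⟨i₀, Finset.mem_univ i₀, hi₀.one_lt_numModels⟩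
  · rw [hprod]
    exact Finset.prod_induction _ (· < ℵ₀) (fun _ _ => mul_lt_aleph0) one_lt_aleph0
      fun i _ => (hfactor i).2

end ModelCount

/-- if the predicates `P i` are pairwise disjoint, `I` is finite, each part is
finite, ω-categorical, or Ehrenfeucht, and at least one part is Ehrenfeucht, then the theory
`T = Th(M)` of the infinite disjoint `P`-combination `M` is Ehrenfeucht, and
`I(T,ω) = ∏_{i ∈ I} I(Th(A_i), min(|A_i|, ω))`. -/
theorem stmt4 (L : FirstOrder.Language.{0,0}) [L.IsRelational] (M : Type) [L.Structure M]
    (I : Type) [Fintype I] (P : I → L.Relations 1)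
    (hcard : L.card ≤ ℵ₀)
    (hdisj : ∀ i j : I, i ≠ j → ∀ a : M,
      ¬ (Structure.RelMap (P i) ![a] ∧ Structure.RelMap (P j) ![a]))
    (hne : ∀ i : I, ∃ a : M, Structure.RelMap (P i) ![a])
    (hcover : ∀ a : M, ∃ i : I, Structure.RelMap (P i) ![a])
    (hnocross : ∀ (n : ℕ) (r : L.Relations n) (x : Fin n → M),
      Structure.RelMap r x → ∃ i : I, ∀ k : Fin n, Structure.RelMap (P i) ![x k])
    (hinf : Infinite M)
    (hparts : ∀ i : I,
      Set.Finite {a : M | Structure.RelMap (P i) ![a]} ∨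
        OmegaCategorical L (partTheory L M {a : M | Structure.RelMap (P i) ![a]}) ∨
        Ehrenfeucht L (partTheory L M {a : M | Structure.RelMap (P i) ![a]}))
    (hEhr : ∃ i : I, Ehrenfeucht L (partTheory L M {a : M | Structure.RelMap (P i) ![a]})) :
    Ehrenfeucht L (L.completeTheory M) ∧
      numModels L (L.completeTheory M) ℵ₀ =
        ∏ i : I, numModels L (partTheory L M {a : M | Structure.RelMap (P i) ![a]})
          (min #{a : M | Structure.RelMap (P i) ![a]} ℵ₀) :=
  stmt4_general ⟨hdisj, hne, hcover, hnocross⟩ hparts hEhr
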